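/- In H₁(B₃(S₄)), the stabilized star classes satisfy the relation (e₄ − e₁)·α₁₂₃ − (e₃ − e₁)·α₁₂₄ + (e₂ − e₁)·α₁₃₄ = 0, and H₁(B₃(S₄)) is free abelian of rank 11, generated by the classes (e_i − e₁)·α_{1jk} (2 ≤ i ≤ 4, 2 ≤ j < k ≤ 4) and e₁·α_{1jk}, subject only to that relation. -/

import Mathlib

/-!
A combinatorial model of the Świątkowski chain complex of a finite graph
(finite CW-complex of dimension ≤ 1), computing the homology of its unordered
configuration spaces (An–Drummond-Cole–Knudsen).

A graph is given by a vertex type `V`, an edge type `E` and an endpoint map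
`ends : E → V × V` (self-loops and multiple edges are allowed).  A half-edge is
a pair `(e, b) : E × Bool`, whose vertex is the corresponding endpoint of `e`.

We work with the ℤ-basis of the Świątkowski complex consisting of a monomial
`m : E →₀ ℕ` in the edges together with a choice, for each vertex `v`, of a
local generator from `S(v) = ℤ⟨∅, v, h ∈ H(v)⟩`: a half-edge at `v`
(`Sum.inl`), the vertex itself (`Sum.inr true`), or `∅` (`Sum.inr false`).
The differential is the ℤ[E]-linear derivation with `∂h = e(h) - v(h)`,
with Koszul signs determined by a fixed enumeration of the vertices.
`degB` is the homological degree (number of half-edge factors) and `wtB` is the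
weight (number of particles).  `hasDW i k` is the subgroup of chains of pure
degree `i` and weight `k`; `cyc i k` the corresponding cycles, `bdry i k` the
boundaries of degree/weight `(i+1, k)` chains, and `Hgr i k` their quotient,
which is `H_i(B_k Γ)`.  `stab e` is edge stabilization (multiplication by `e`).
-/

namespace Swiatkowski

variable {V E : Type} [Fintype V] [Fintype E] [DecidableEq V] [DecidableEq E]

/-- The vertex of a half-edge. -/
def vtx (ends : E → V × V) (h : E × Bool) : V :=
  cond h.2 (ends h.1).2 (ends h.1).1

/-- The local generators at a vertex `v`: a half-edge at `v`, or the vertex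
generator (`true`), or `∅` (`false`). -/
abbrev VGen (ends : E → V × V) (v : V) : Type :=
  {h : E × Bool // vtx ends h = v} ⊕ Bool

/-- A choice of local generator at every vertex. -/
abbrev States (ends : E → V × V) : Type := ∀ v : V, VGen ends v

/-- The ℤ-basis of the Świątkowski complex: an edge monomial together with a
state. -/
abbrev Bas (ends : E → V × V) : Type := (E →₀ ℕ) × States ends

/-- The underlying ℤ-module of the Świątkowski complex. -/
abbrev SC (ends : E → V × V) : Type := Bas ends →₀ ℤ

variable (ends : E → V × V)

/-- An enumeration of the vertices, used for Koszul signs. -/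
noncomputable def idx : V → ℕ := fun v => ((Fintype.equivFin V) v : ℕ)

/-- The Koszul sign of the half-edge slot at `v` inside the state `f`. -/
noncomputable def sgn (f : States ends) (v : V) : ℤ :=
  (-1) ^ (Finset.univ.filter fun w => idx w < idx v ∧ (f w).isLeft = true).card

/-- Homological degree of a basis element: its number of half-edge factors. -/
def degB (b : Bas ends) : ℕ :=
  (Finset.univ.filter fun v => (b.2 v).isLeft = true).card

/-- Weight (particle number) of a basis element. -/
def wtB (b : Bas ends) : ℕ :=
  (b.1.sum fun _ n => n) + ∑ v : V, Sum.elim (fun _ => 1) (fun t => cond t 1 0) (b.2 v)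

/-- Value of the differential on a basis element: the signed sum over the
half-edge slots `h` of the substitutions `h ↦ e(h)` and `h ↦ v(h)`. -/
noncomputable def Db (b : Bas ends) : SC ends :=
  ∑ v : V,
    (match b.2 v with
      | Sum.inl h =>
          sgn ends b.2 v •
            (Finsupp.single (b.1 + Finsupp.single h.1.1 1,
                Function.update b.2 v (Sum.inr false)) (1 : ℤ)
              - Finsupp.single (b.1, Function.update b.2 v (Sum.inr true)) (1 : ℤ))
      | Sum.inr _ => 0)

/-- The differential of the Świątkowski complex. -/
noncomputable def D : SC ends →ₗ[ℤ] SC ends :=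
  Finsupp.linearCombination ℤ (Db ends)

/-- The subgroup of chains of pure homological degree `i` and weight `k`. -/
noncomputable def hasDW (i k : ℕ) : Submodule ℤ (SC ends) where
  carrier := {x | ∀ b ∈ x.support, degB ends b = i ∧ wtB ends b = k}
  add_mem' := by
    intro x y hx hy b hb
    rcases Finset.mem_union.mp (Finsupp.support_add hb) with h | h
    exacts [hx b h, hy b h]
  zero_mem' := by simp
  smul_mem' := by
    intro c x hx b hb
    exact hx b (Finsupp.support_smul hb)

/-- Cycles of degree `i` and weight `k`. -/
noncomputable def cyc (i k : ℕ) : Submodule ℤ (SC ends) := LinearMap.ker (D ends) ⊓ hasDW ends i k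

/-- Boundaries of degree `i` and weight `k` chains. -/
noncomputable def bdry (i k : ℕ) : Submodule ℤ (SC ends) := Submodule.map (D ends) (hasDW ends (i + 1) k)

/-- The homology `H_i(B_k Γ)` of the weight-`k` Świątkowski complex. -/
noncomputable def Hgr (i k : ℕ) :=
  cyc ends i k ⧸ Submodule.comap (cyc ends i k).subtype (bdry ends i k)

noncomputable instance (i k : ℕ) : AddCommGroup (Hgr ends i k) :=
  inferInstanceAs (AddCommGroup
    (cyc ends i k ⧸ Submodule.comap (cyc ends i k).subtype (bdry ends i k)))

/-- Edge stabilization: multiplication by the edge `e`. -/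
noncomputable def stab (e : E) : SC ends →ₗ[ℤ] SC ends :=
  Finsupp.lmapDomain ℤ ℤ fun b => (b.1 + Finsupp.single e 1, b.2)

end Swiatkowski

namespace Star4

open Swiatkowski

/-- The star graph `S₄`: a central vertex `none` joined to four leaves
`some i` by the edges `i : Fin 4`. -/
def ends : Fin 4 → Option (Fin 4) × Option (Fin 4) := fun e => (none, some e)

/-- The state placing the half-edge of edge `j` at the central vertex and `∅`
everywhere else. -/
def stateH (j : Fin 4) : States ends := fun v =>
  match v with
  | none => Sum.inl ⟨(j, false), rfl⟩
  | some _ => Sum.inr false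

/-- The degree-one basis chain `h_j` (half-edge of edge `j` at the center). -/
noncomputable def sH (j : Fin 4) : SC ends :=
  Finsupp.single ((0 : Fin 4 →₀ ℕ), stateH j) (1 : ℤ)

/-- The star cycle `α_{1jk} = e_k(h₁ − h_j) + e_j(h_k − h₁) + e₁(h_j − h_k)`
(indices shifted to start at `0`). -/
noncomputable def starCyc (j k : Fin 4) : SC ends :=
  stab ends k (sH 0 - sH j) + stab ends j (sH k - sH 0) + stab ends 0 (sH j - sH k)

/-- The three index pairs `(j,k)` with `2 ≤ j < k ≤ 4` (shifted to start at
`0`), enumerating the star classes `α₁₂₃, α₁₂₄, α₁₃₄`. -/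
def pairs : Fin 3 → Fin 4 × Fin 4 := ![(1, 2), (1, 3), (2, 3)]

/-- The twelve generators of `H₁(B₃(S₄))`: for each star class `α_{1jk}` the
stabilized classes `e₁·α_{1jk}` (second index `0`) and `(e_i − e₁)·α_{1jk}`
for `2 ≤ i ≤ 4` (second index `i − 1`, shifted). -/
noncomputable def gen (q : Fin 3 × Fin 4) : SC ends :=
  if q.2 = 0 then stab ends 0 (starCyc (pairs q.1).1 (pairs q.1).2)
  else (stab ends q.2 - stab ends 0) (starCyc (pairs q.1).1 (pairs q.1).2)

/-- The coefficient vector of the single relation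
`(e₄ − e₁)·α₁₂₃ − (e₃ − e₁)·α₁₂₄ + (e₂ − e₁)·α₁₃₄ = 0`. -/
def rel : Fin 3 × Fin 4 → ℤ := fun q =>
  if q = (0, 3) then 1 else if q = (1, 2) then -1 else if q = (2, 1) then 1 else 0

end Star4

/-!
The single half-edge at a leaf makes the local complex there contract onto `∅`, so up to boundaries
every cycle is a chain `∑ⱼ pⱼ hⱼ` concentrated at the centre, where nothing of degree two is left to
bound it. Such a chain is a cycle exactly when `∑ⱼ pⱼ = 0` and `∑ⱼ eⱼ pⱼ = 0`, that is, when
`p₂, p₃, p₄` is a syzygy of the regular sequence `e₂ - e₁, e₃ - e₁, e₄ - e₁`. By exactness of the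
Koszul complex these syzygies are generated over `ℤ[e₁, …, e₄]` by the three star classes, and the
relations between the star classes by a single one with linear coefficients. In weight three the
coefficients of the star classes are linear forms, for which `e₁, e₂ - e₁, e₃ - e₁, e₄ - e₁` is a
basis.
-/

section FreeModule

variable {ι R M : Type*} [Ring R] [AddCommGroup M] [Module R M]

lemma map_mem_of_mem_supported {S : Set ι} {T : (ι →₀ R) →ₗ[R] M} {N : Submodule R M}
    (hT : ∀ b ∈ S, T (Finsupp.single b 1) ∈ N) {x : ι →₀ R}
    (hx : x ∈ Finsupp.supported R R S) : T x ∈ N := by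
  rw [Finsupp.supported_eq_span_single] at hx
  exact Submodule.span_le.mpr (Set.image_subset_iff.mpr hT : _ ⊆ (N.comap T : Set (ι →₀ R))) hx

end FreeModule

lemma sum_mul_self_eq_zero_of_anticommute {ι R : Type*} [Fintype ι] [NonUnitalNonAssocRing R]
    {d : ι → R} (hsq : ∀ i, d i * d i = 0) (hanti : ∀ i j, i ≠ j → d i * d j = -(d j * d i)) :
    (∑ i, d i) * ∑ i, d i = 0 := by
  classical
  rw [Finset.sum_mul_sum, ← Finset.sum_product']
  refine Finset.sum_involution (fun p _ ↦ p.swap) ?_ ?_ (by simp) (by simp)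
  · rintro ⟨i, j⟩ -
    obtain rfl | hij := eq_or_ne i j
    · simp [hsq]
    · simp [hanti i j hij]
  · rintro ⟨i, j⟩ - hne heq
    obtain rfl : j = i := congrArg Prod.fst heq
    exact hne (hsq j)

lemma sum_apply_update_add {ι M : Type*} [Fintype ι] [DecidableEq ι] [AddCommMonoid M]
    {β : ι → Type*} (g : ∀ i, β i → M) (f : ∀ i, β i) (i : ι) (a : β i) :
    ∑ j, g j (Function.update f i a j) + g i (f i) = ∑ j, g j (f j) + g i a := by
  simp only [Function.apply_update g, Finset.sum_update_of_mem (Finset.mem_univ i)]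
  rw [← Finset.add_sum_erase _ (fun j ↦ g j (f j)) (Finset.mem_univ i),
    Finset.sdiff_singleton_eq_erase]
  abel

section Koszul

open RingTheory.Sequence

variable {R : Type*} [CommRing R]

lemma isWeaklyRegular_iff_forall_mem_ofList (rs : List R) :
    IsWeaklyRegular R rs ↔ ∀ i (h : i < rs.length) (x : R),
      rs[i] * x ∈ Ideal.ofList (rs.take i) → x ∈ Ideal.ofList (rs.take i) := by
  simp only [isWeaklyRegular_iff, isSMulRegular_quotient_iff_mem_of_smul_mem, smul_eq_mul,
    Ideal.mul_top]

variable {a b c : R}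

lemma exists_eq_koszul_of_add_eq_zero (hreg : IsWeaklyRegular R [a, b, c]) {p q r : R}
    (h : a * p + b * q + c * r = 0) :
    ∃ u v w, p = -(c * u) - b * w ∧ q = a * w - c * v ∧ r = a * u + b * v := by
  rw [isWeaklyRegular_iff_forall_mem_ofList] at hreg
  have hr : r ∈ Ideal.span {a, b} := by
    simpa [Ideal.ofList, Set.insert_def] using hreg 2 (by simp) r <| by
      simpa [Ideal.ofList, Set.insert_def] using
        Ideal.mem_span_pair.mpr ⟨-p, -q, by linear_combination -h⟩
  obtain ⟨u, v, rfl⟩ := Ideal.mem_span_pair.mp hr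
  have hq : q + c * v ∈ Ideal.span {a} := by
    simpa [Ideal.ofList] using hreg 1 (by simp) (q + c * v) <| by
      simpa [Ideal.ofList] using
        Ideal.mem_span_singleton'.mpr ⟨-p - c * u, by linear_combination -h⟩
  obtain ⟨w, hw⟩ := Ideal.mem_span_singleton'.mp hq
  have hp : p + c * u + b * w = 0 := by
    simpa [Ideal.ofList] using hreg 0 (by simp) (p + c * u + b * w) <| by
      simpa [Ideal.ofList] using (by linear_combination h + b * hw :
        a * (p + c * u + b * w) = 0)
  exact ⟨u, v, w, by linear_combination hp, by linear_combination -hw, by ring⟩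

lemma exists_eq_koszul_of_mul_eq_mul (hreg : IsWeaklyRegular R [a, b]) {u v w : R}
    (hvw : a * w = c * v) (huv : a * u = -(b * v)) :
    ∃ s, u = b * s ∧ v = -(a * s) ∧ w = -(c * s) := by
  rw [isWeaklyRegular_iff_forall_mem_ofList] at hreg
  have ha : ∀ x, a * x = 0 → x = 0 := fun x hx ↦ by
    simpa [Ideal.ofList] using hreg 0 (by simp) x (by simpa [Ideal.ofList] using hx)
  have hv : v ∈ Ideal.span {a} := by
    simpa [Ideal.ofList] using hreg 1 (by simp) v <| by
      simpa [Ideal.ofList] using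
        Ideal.mem_span_singleton'.mpr ⟨-u, by linear_combination -huv⟩
  obtain ⟨s, rfl⟩ := Ideal.mem_span_singleton'.mp hv
  refine ⟨-s, ?_, by ring, ?_⟩
  · exact sub_eq_zero.mp (ha _ (by linear_combination huv))
  · exact sub_eq_zero.mp (ha _ (by linear_combination hvw))

end Koszul

section Polynomials

open MvPolynomial RingTheory.Sequence

variable {σ R : Type*} [CommRing R]

lemma mem_span_X_sub_X_iff (S : Set σ) [DecidablePred (· ∈ S)] (i : σ)
    (p : MvPolynomial σ R) :
    p ∈ Ideal.span ((fun j ↦ X j - X i) '' S) ↔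
      aeval (fun k ↦ if k ∈ S then X i else X k : σ → MvPolynomial σ R) p = 0 := by
  set I : Ideal (MvPolynomial σ R) := Ideal.span ((fun j ↦ X j - X i) '' S)
  set φ : MvPolynomial σ R →ₐ[R] MvPolynomial σ R := aeval fun k ↦ if k ∈ S then X i else X k
  constructor
  · suffices I ≤ RingHom.ker φ from fun hp ↦ this hp
    refine Ideal.span_le.mpr (Set.image_subset_iff.mpr fun j hj ↦ ?_)
    simp only [φ, Set.mem_preimage, SetLike.mem_coe, RingHom.mem_ker, map_sub, aeval_X, if_pos hj]
    split_ifs <;> simp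
  · intro hp
    have hφ : (Ideal.Quotient.mkₐ R I).comp φ = Ideal.Quotient.mkₐ R I := by
      ext k
      by_cases hk : k ∈ S
      · have hmem : (X k - X i : MvPolynomial σ R) ∈ I :=
          Ideal.subset_span ⟨k, hk, rfl⟩
        simpa [φ, hk] using ((Ideal.Quotient.mk_eq_mk_iff_sub_mem _ _).mpr hmem).symm
      · simp [φ, hk]
    rw [← Ideal.Quotient.eq_zero_iff_mem]
    simpa [hp] using (DFunLike.congr_fun hφ p).symm

lemma isWeaklyRegular_X_sub_X [IsDomain R] {i : σ} {js : List σ} (h : (i :: js).Nodup) :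
    IsWeaklyRegular (MvPolynomial σ R) (js.map fun j ↦ (X j - X i : MvPolynomial σ R)) := by
  classical
  rw [isWeaklyRegular_iff_forall_mem_ofList]
  intro n hn p
  rw [List.length_map] at hn
  have hspan : Ideal.ofList ((js.map fun j ↦ (X j - X i : MvPolynomial σ R)).take n) =
      Ideal.span ((fun j ↦ X j - X i) '' {j | j ∈ js.take n}) := by
    simp [Ideal.ofList, ← List.map_take, Set.image]
  obtain ⟨hi, hjs⟩ := List.nodup_cons.mp h
  have hn_notMem : js[n] ∉ js.take n := fun hmem ↦ by
    obtain ⟨m, hm, hmn⟩ := List.mem_take_iff_getElem.mp hmem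
    have := (List.Nodup.getElem_inj_iff hjs).mp hmn
    lia
  have hi_notMem : i ∉ js.take n := fun hmem ↦ hi (List.mem_of_mem_take hmem)
  have hne : (X js[n] - X i : MvPolynomial σ R) ≠ 0 :=
    sub_ne_zero.mpr fun heq ↦ hi (X_injective heq ▸ List.getElem_mem hn)
  rw [hspan, mem_span_X_sub_X_iff, mem_span_X_sub_X_iff]
  simp [hn_notMem, hi_notMem, hne]

lemma isHomogeneous_X_sub_X (i j : σ) : (X i - X j : MvPolynomial σ R).IsHomogeneous 1 :=
  (isHomogeneous_X R i).sub (isHomogeneous_X R j)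

lemma homogeneousComponent_mul_of_isHomogeneous_left {m : ℕ} {p : MvPolynomial σ R}
    (hp : p.IsHomogeneous m) (n : ℕ) (q : MvPolynomial σ R) :
    homogeneousComponent (m + n) (p * q) = p * homogeneousComponent n q := by
  let _ := gradedAlgebra (σ := σ) (R := R)
  have h := DirectSum.coe_decompose_mul_add_of_left_mem (homogeneousSubmodule σ R) (j := n)
    (b := q) ((mem_homogeneousSubmodule m p).mpr hp)
  rwa [← DirectSum.Decomposition.decompose'_eq, decomposition.decompose'_apply,
    decomposition.decompose'_apply] at h

variable {a b c : MvPolynomial σ R} {d : ℕ}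

lemma exists_isHomogeneous_koszul_of_add_eq_zero (ha : a.IsHomogeneous d) (hb : b.IsHomogeneous d)
    (hc : c.IsHomogeneous d) (hreg : IsWeaklyRegular (MvPolynomial σ R) [a, b, c]) {n : ℕ}
    {p q r : MvPolynomial σ R} (hp : p.IsHomogeneous (d + n)) (hq : q.IsHomogeneous (d + n))
    (hr : r.IsHomogeneous (d + n)) (h : a * p + b * q + c * r = 0) :
    ∃ u v w : MvPolynomial σ R, u.IsHomogeneous n ∧ v.IsHomogeneous n ∧ w.IsHomogeneous n ∧
      p = -(c * u) - b * w ∧ q = a * w - c * v ∧ r = a * u + b * v := by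
  obtain ⟨u, v, w, hpu, hqv, hrw⟩ := exists_eq_koszul_of_add_eq_zero hreg h
  refine ⟨homogeneousComponent n u, homogeneousComponent n v, homogeneousComponent n w,
    homogeneousComponent_isHomogeneous _ _, homogeneousComponent_isHomogeneous _ _,
    homogeneousComponent_isHomogeneous _ _, ?_, ?_, ?_⟩
  · rw [← homogeneousComponent_eq_self hp, hpu, map_sub, map_neg,
      homogeneousComponent_mul_of_isHomogeneous_left hc,
      homogeneousComponent_mul_of_isHomogeneous_left hb]
  · rw [← homogeneousComponent_eq_self hq, hqv, map_sub,
      homogeneousComponent_mul_of_isHomogeneous_left ha,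
      homogeneousComponent_mul_of_isHomogeneous_left hc]
  · rw [← homogeneousComponent_eq_self hr, hrw, map_add,
      homogeneousComponent_mul_of_isHomogeneous_left ha,
      homogeneousComponent_mul_of_isHomogeneous_left hb]

lemma exists_isHomogeneous_koszul_of_mul_eq_mul (ha : a.IsHomogeneous d) (hb : b.IsHomogeneous d)
    (hc : c.IsHomogeneous d) (hreg : IsWeaklyRegular (MvPolynomial σ R) [a, b]) {n : ℕ}
    {u v w : MvPolynomial σ R} (hu : u.IsHomogeneous (d + n)) (hv : v.IsHomogeneous (d + n))
    (hw : w.IsHomogeneous (d + n)) (hvw : a * w = c * v) (huv : a * u = -(b * v)) :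
    ∃ s : MvPolynomial σ R, s.IsHomogeneous n ∧ u = b * s ∧ v = -(a * s) ∧ w = -(c * s) := by
  obtain ⟨s, hus, hvs, hws⟩ := exists_eq_koszul_of_mul_eq_mul hreg hvw huv
  refine ⟨homogeneousComponent n s, homogeneousComponent_isHomogeneous _ _, ?_, ?_, ?_⟩
  · rw [← homogeneousComponent_eq_self hu, hus, homogeneousComponent_mul_of_isHomogeneous_left hb]
  · rw [← homogeneousComponent_eq_self hv, hvs, map_neg,
      homogeneousComponent_mul_of_isHomogeneous_left ha]
  · rw [← homogeneousComponent_eq_self hw, hws, map_neg,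
      homogeneousComponent_mul_of_isHomogeneous_left hc]

end Polynomials

section LinearForms

open MvPolynomial

variable {σ R : Type*} [DecidableEq σ] [CommRing R]

variable (R) in
/-- The basis `X i₀`, `X i - X i₀` (`i ≠ i₀`) of the linear forms. -/
noncomputable def shiftedX (i₀ i : σ) : MvPolynomial σ R :=
  if i = i₀ then X i₀ else X i - X i₀

lemma isHomogeneous_shiftedX (i₀ i : σ) : (shiftedX R i₀ i).IsHomogeneous 1 := by
  rw [shiftedX]
  split_ifs
  exacts [isHomogeneous_X R i₀, isHomogeneous_X_sub_X i i₀]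

lemma exists_eq_sum_smul_shiftedX [Fintype σ] (i₀ : σ) {p : MvPolynomial σ R}
    (hp : p.IsHomogeneous 1) : ∃ c : σ → R, p = ∑ i, c i • shiftedX R i₀ i := by
  rw [← mem_homogeneousSubmodule, homogeneousSubmodule_one_eq_span_X] at hp
  have hspan : Submodule.span R (Set.range X) ≤ Submodule.span R (Set.range (shiftedX R i₀)) := by
    rw [Submodule.span_le, Set.range_subset_iff]
    intro i
    have hmem : ∀ j, shiftedX R i₀ j ∈ Submodule.span R (Set.range (shiftedX R i₀)) :=
      fun j ↦ Submodule.subset_span (Set.mem_range_self j)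
    obtain rfl | hi := eq_or_ne i i₀
    · simpa [shiftedX] using hmem i
    · simpa [shiftedX, hi] using add_mem (hmem i) (hmem i₀)
  obtain ⟨c, hc⟩ := (Submodule.mem_span_range_iff_exists_fun R).mp (hspan hp)
  exact ⟨c, hc.symm⟩

lemma linearIndependent_shiftedX (i₀ : σ) : LinearIndependent R (shiftedX R i₀) := by
  let dualPoint : σ → σ → R := fun j ↦ if j = i₀ then 1 else Pi.single j 1
  have hdual : ∀ i j, eval (dualPoint j) (shiftedX R i₀ i) = if i = j then (1 : R) else 0 := by
    intro i j
    simp only [dualPoint, shiftedX]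
    split_ifs <;> simp_all [eq_comm]
  refine linearIndependent_iff'.mpr fun s c hc j hj ↦ ?_
  simpa [hdual, smul_eval, hj] using congrArg (eval (dualPoint j)) hc

end LinearForms

section Rank

variable {ι R M : Type*} [Ring R] [AddCommGroup M] [Module R M]

lemma nonempty_linearEquiv_of_ker_eq_span_singleton {T : (ι → R) →ₗ[R] M}
    (hT : Function.Surjective T) {r : ι → R} (hker : LinearMap.ker T = Submodule.span R {r})
    {i₀ : ι} (hr : r i₀ = 1) : Nonempty (M ≃ₗ[R] ({i // i ≠ i₀} → R)) := by
  classical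
  let extendZero : ({i // i ≠ i₀} → R) →ₗ[R] ι → R := Function.ExtendByZero.linearMap R Subtype.val
  have hval : ∀ f (i : {i // i ≠ i₀}), extendZero f i = f i :=
    fun f i ↦ Subtype.val_injective.extend_apply f (0 : ι → R) i
  have hi₀ : ∀ f, extendZero f i₀ = 0 :=
    fun f ↦ Function.extend_apply' f (0 : ι → R) i₀ (by rintro ⟨i, hi⟩; exact i.2 hi)
  refine ⟨(LinearEquiv.ofBijective (T ∘ₗ extendZero) ⟨?_, fun m ↦ ?_⟩).symm⟩
  · refine (injective_iff_map_eq_zero _).mpr fun f hf ↦ ?_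
    have hf' : extendZero f ∈ Submodule.span R {r} := hker ▸ hf
    obtain ⟨n, hn⟩ := Submodule.mem_span_singleton.mp hf'
    obtain rfl : n = 0 := by simpa [hr, hi₀] using congrFun hn i₀
    funext i
    rw [← hval f, ← hn, zero_smul, Pi.zero_apply, Pi.zero_apply]
  · obtain ⟨f, rfl⟩ := hT m
    have hTr : T r = 0 := by
      rw [← LinearMap.mem_ker, hker]
      exact Submodule.mem_span_singleton_self r
    have hf : extendZero (fun i ↦ f i - f i₀ * r i) = f - f i₀ • r := by
      funext i
      obtain rfl | hi := eq_or_ne i i₀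
      · simp [hi₀, hr]
      · simpa using hval (fun i ↦ f i - f i₀ * r i) ⟨i, hi⟩
    refine ⟨fun i ↦ f i - f i₀ * r i, ?_⟩
    rw [LinearMap.comp_apply, hf, map_sub, map_smul, hTr, smul_zero, sub_zero]

end Rank

namespace Swiatkowski

section Signs

variable {V E : Type} [Fintype V] (ends : E → V × V)

lemma sgn_eq_prod (f : States ends) (v : V) :
    sgn ends f v = ∏ u, if idx u < idx v ∧ (f u).isLeft = true then -1 else 1 := by
  simp [sgn, Finset.prod_ite]

lemma sgn_mul_self (f : States ends) (v : V) : sgn ends f v * sgn ends f v = 1 := by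
  rw [sgn, ← mul_pow]
  simp

variable [DecidableEq V]

lemma sgn_update_self (f : States ends) (v : V) (x : VGen ends v) :
    sgn ends (Function.update f v x) v = sgn ends f v := by
  rw [sgn, sgn]
  congr 3
  ext u
  obtain rfl | h := eq_or_ne u v <;> simp [*]

lemma sgn_update_of_isLeft_ne {f : States ends} {w : V} {x : VGen ends w}
    (hx : x.isLeft ≠ (f w).isLeft) (v : V) :
    sgn ends (Function.update f w x) v =
      if idx w < idx v then -sgn ends f v else sgn ends f v := by
  have h := fun g : States ends ↦ Finset.mul_prod_erase Finset.univ
    (fun u ↦ if idx u < idx v ∧ (g u).isLeft = true then (-1 : ℤ) else 1) (Finset.mem_univ w)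
  rw [sgn_eq_prod, sgn_eq_prod, ← h, ← h]
  have herase : ∀ u ∈ Finset.univ.erase w, Function.update f w x u = f u := fun u hu ↦
    Function.update_of_ne (Finset.ne_of_mem_erase hu) _ _
  rw [Finset.prod_congr rfl fun u hu ↦ by rw [herase u hu], Function.update_self]
  by_cases hlt : idx w < idx v <;> cases hx' : x.isLeft <;> cases hf : (f w).isLeft <;>
    simp_all

lemma sgn_mul_sgn_update_anticomm {v w : V} (hvw : v ≠ w) {f : States ends}
    {x : VGen ends v} {y : VGen ends w}
    (hx : x.isLeft ≠ (f v).isLeft) (hy : y.isLeft ≠ (f w).isLeft) :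
    sgn ends f w * sgn ends (Function.update f w y) v =
      -(sgn ends f v * sgn ends (Function.update f v x) w) := by
  have hidx : idx v ≠ idx w := fun h ↦ hvw ((Fintype.equivFin V).injective (Fin.ext h))
  rw [sgn_update_of_isLeft_ne ends hx, sgn_update_of_isLeft_ne ends hy]
  obtain h | h := hidx.lt_or_gt <;> simp [h, h.not_gt, mul_comm]

end Signs

section LocalOperators

variable {V E : Type} [DecidableEq V] (ends : E → V × V)

/-- A map from the local generators at `v` to the free `ℤ[E]`-module `S(v)` on them, whose elements
are encoded as combinations of pairs (edge monomial, local generator). -/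
abbrev LocalMap (v : V) : Type := VGen ends v → ((E →₀ ℕ) × VGen ends v) →₀ ℤ

/-- A local map is odd if it exchanges half-edges with the generators of degree zero. -/
def LocalMap.IsOdd {ends : E → V × V} {v : V} (t : LocalMap ends v) : Prop :=
  ∀ x, ∀ y ∈ (t x).support, y.2.isLeft ≠ x.isLeft

/-- The basis element obtained from `b` by multiplying with the edge monomial `y.1` and replacing
the generator at `v` by `y.2`. -/
noncomputable def plug (v : V) (b : Bas ends) (y : (E →₀ ℕ) × VGen ends v) : Bas ends :=
  (b.1 + y.1, Function.update b.2 v y.2)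

variable {ends}

lemma plug_plug_self (v : V) (b : Bas ends) (y z : (E →₀ ℕ) × VGen ends v) :
    plug ends v (plug ends v b y) z = plug ends v b (y.1 + z.1, z.2) := by
  simp [plug, add_assoc]

lemma plug_comm {v w : V} (hvw : v ≠ w) (b : Bas ends) (y : (E →₀ ℕ) × VGen ends v)
    (z : (E →₀ ℕ) × VGen ends w) :
    plug ends w (plug ends v b y) z = plug ends v (plug ends w b z) y := by
  simp only [plug, Function.update_comm hvw, add_right_comm]

variable [Fintype V]

/-- The `ℤ[E]`-linear operator applying `t` to the tensor factor at `v`, with the Koszul sign of an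
operator of odd degree. -/
noncomputable def localOp (v : V) (t : LocalMap ends v) : Module.End ℤ (SC ends) :=
  Finsupp.linearCombination ℤ fun b ↦
    sgn ends b.2 v • Finsupp.mapDomain (plug ends v b) (t (b.2 v))

lemma localOp_single (v : V) (t : LocalMap ends v) (b : Bas ends) :
    localOp v t (Finsupp.single b 1) =
      sgn ends b.2 v • Finsupp.mapDomain (plug ends v b) (t (b.2 v)) := by
  simp [localOp]

lemma localOp_single_eq_sum (v : V) (t : LocalMap ends v) (b : Bas ends) :
    localOp v t (Finsupp.single b 1) =
      ∑ y ∈ (t (b.2 v)).support,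
        (sgn ends b.2 v * t (b.2 v) y) • Finsupp.single (plug ends v b y) 1 := by
  simp [localOp_single, Finsupp.mapDomain, Finsupp.sum, Finset.smul_sum]

lemma localOp_anticomm {v w : V} (hvw : v ≠ w) {t : LocalMap ends v} {u : LocalMap ends w}
    (ht : t.IsOdd) (hu : u.IsOdd) : localOp v t * localOp w u = -(localOp w u * localOp v t) := by
  ext1 b
  apply LinearMap.ext_ring
  have hw : ∀ y, (plug ends v b y).2 w = b.2 w := fun y ↦ Function.update_of_ne hvw.symm _ _
  have hv : ∀ y, (plug ends w b y).2 v = b.2 v := fun y ↦ Function.update_of_ne hvw _ _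
  simp only [LinearMap.comp_apply, Finsupp.lsingle_apply, Module.End.mul_apply,
    LinearMap.neg_apply]
  rw [localOp_single_eq_sum w, localOp_single_eq_sum v, map_sum, map_sum,
    ← Finset.sum_neg_distrib]
  simp only [map_zsmul, localOp_single_eq_sum, hv, hw, Finset.smul_sum, smul_smul]
  simp only [← Finset.sum_neg_distrib, ← neg_smul]
  rw [Finset.sum_comm]
  refine Finset.sum_congr rfl fun y hy ↦ Finset.sum_congr rfl fun z hz ↦ ?_
  have hsgn : sgn ends b.2 w * sgn ends (plug ends w b z).2 v =
      -(sgn ends b.2 v * sgn ends (plug ends v b y).2 w) :=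
    sgn_mul_sgn_update_anticomm ends hvw (ht _ y hy) (hu _ z hz)
  rw [plug_comm hvw]
  congr 1
  linear_combination (t (b.2 v) y * u (b.2 w) z) * hsgn

end LocalOperators

section Grading

variable {V E : Type} {ends : E → V × V}

/-- Number of half-edge factors of a local generator. -/
def genDeg {v : V} (x : VGen ends v) : ℕ := if x.isLeft = true then 1 else 0

/-- Number of particles carried by a local generator. -/
def genWt {v : V} (x : VGen ends v) : ℕ := Sum.elim (fun _ ↦ 1) (fun t ↦ cond t 1 0) x

variable [Fintype V]

lemma degB_eq_sum (b : Bas ends) : degB ends b = ∑ v, genDeg (b.2 v) := by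
  simp only [degB, genDeg, Finset.card_filter]

lemma wtB_eq_sum (b : Bas ends) : wtB ends b = b.1.degree + ∑ v, genWt (b.2 v) := rfl

variable [DecidableEq V]

lemma degB_plug (v : V) (b : Bas ends) (y : (E →₀ ℕ) × VGen ends v) :
    degB ends (plug ends v b y) + genDeg (b.2 v) = degB ends b + genDeg y.2 := by
  simp only [degB_eq_sum, plug]
  exact sum_apply_update_add (fun w (x : VGen ends w) ↦ genDeg x) b.2 v y.2

lemma wtB_plug (v : V) (b : Bas ends) (y : (E →₀ ℕ) × VGen ends v) :
    wtB ends (plug ends v b y) + genWt (b.2 v) = wtB ends b + (y.1.degree + genWt y.2) := by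
  have h := sum_apply_update_add (fun w (x : VGen ends w) ↦ genWt x) b.2 v y.2
  simp only [wtB_eq_sum, plug, map_add]
  lia

lemma localOp_mem_hasDW [DecidableEq E] {v : V} {t : LocalMap ends v} {i j : ℕ}
    (hdeg : ∀ x, ∀ y ∈ (t x).support, genDeg y.2 + i = genDeg x + j)
    (hwt : ∀ x, ∀ y ∈ (t x).support, y.1.degree + genWt y.2 = genWt x)
    {k : ℕ} {c : SC ends} (hc : c ∈ hasDW ends i k) : localOp v t c ∈ hasDW ends j k := by
  refine map_mem_of_mem_supported ?_ hc
  rintro b ⟨rfl, rfl⟩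
  rw [localOp_single_eq_sum]
  refine Submodule.sum_mem _ fun y hy ↦ Submodule.smul_mem _ _ <|
    Finsupp.single_mem_supported ℤ 1 ⟨?_, ?_⟩
  · have := degB_plug v b y
    have := hdeg _ y hy
    lia
  · have := wtB_plug v b y
    have := hwt _ y hy
    lia

end Grading

section EmptySlots

variable {V E : Type} {ends : E → V × V}

variable (ends) in
/-- The chains whose tensor factor at each vertex of `Z` is `∅`. -/
noncomputable def emptyOn (Z : Set V) : Submodule ℤ (SC ends) :=
  Finsupp.supported ℤ ℤ {b | ∀ v ∈ Z, b.2 v = Sum.inr false}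

lemma emptyOn_insert (v : V) (Z : Set V) :
    emptyOn ends (insert v Z) = emptyOn ends {v} ⊓ emptyOn ends Z := by
  rw [emptyOn, emptyOn, emptyOn, ← Finsupp.supported_inter]
  congr 1
  ext b
  simp

variable [Fintype V] [DecidableEq V]

lemma localOp_eq_zero_of_mem_emptyOn {v : V} {t : LocalMap ends v} (ht : t (Sum.inr false) = 0)
    {c : SC ends} (hc : c ∈ emptyOn ends {v}) : localOp v t c = 0 := by
  rw [← Submodule.mem_bot ℤ]
  refine map_mem_of_mem_supported (fun b hb ↦ ?_) hc
  rw [localOp_single, hb v rfl, ht]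
  simp

lemma localOp_mem_emptyOn {v : V} {t : LocalMap ends v} (ht : t (Sum.inr false) = 0)
    {Z : Set V} {c : SC ends} (hc : c ∈ emptyOn ends Z) : localOp v t c ∈ emptyOn ends Z := by
  refine map_mem_of_mem_supported (fun b hb ↦ ?_) hc
  rw [localOp_single_eq_sum]
  refine Submodule.sum_mem _ fun y hy ↦ Submodule.smul_mem _ _ <|
    Finsupp.single_mem_supported ℤ 1 fun w hw ↦ ?_
  obtain rfl | hwv := eq_or_ne w v
  · simp [hb w hw, ht] at hy
  · exact (Function.update_of_ne hwv _ _).trans (hb w hw)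

end EmptySlots

section Differential

variable {V E : Type} {ends : E → V × V}

/-- The local differential `h ↦ e(h) - v` at the vertex `v`. -/
noncomputable def localD (v : V) : LocalMap ends v :=
  Sum.elim
    (fun h ↦ Finsupp.single (Finsupp.single h.1.1 1, Sum.inr false) 1 -
      Finsupp.single (0, Sum.inr true) 1)
    (fun _ ↦ 0)

lemma exists_inl_inr_of_mem_support_localD {v : V} {x : VGen ends v} {y : (E →₀ ℕ) × VGen ends v}
    (hy : y ∈ (localD v x).support) :
    ∃ h, x = Sum.inl h ∧ (y = (Finsupp.single h.1.1 1, Sum.inr false) ∨ y = (0, Sum.inr true)) := by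
  classical
  obtain h | s := x
  · simpa using Finsupp.support_sub hy
  · simp [localD] at hy

lemma localD_isOdd (v : V) : (localD v : LocalMap ends v).IsOdd := by
  intro x y hy
  obtain ⟨h, rfl, rfl | rfl⟩ := exists_inl_inr_of_mem_support_localD hy <;> simp

variable [Fintype V] [DecidableEq V]

lemma localOp_localD_single_inl {v : V} {b : Bas ends} {h : {h : E × Bool // vtx ends h = v}}
    (hb : b.2 v = Sum.inl h) :
    localOp v (localD v) (Finsupp.single b 1) = sgn ends b.2 v •
      (Finsupp.single (plug ends v b (Finsupp.single h.1.1 1, Sum.inr false)) 1 -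
        Finsupp.single (plug ends v b (0, Sum.inr true)) 1) := by
  rw [localOp_single, hb, localD, Sum.elim_inl, sub_eq_add_neg, Finsupp.mapDomain_add,
    ← Finsupp.single_neg, Finsupp.mapDomain_single, Finsupp.mapDomain_single, Finsupp.single_neg,
    ← sub_eq_add_neg]

lemma localOp_localD_single_inr {v : V} {b : Bas ends} {s : Bool} (hb : b.2 v = Sum.inr s) :
    localOp v (localD v) (Finsupp.single b 1) = 0 := by
  simp [localOp_single, hb, localD]

variable (ends) in
lemma D_eq_sum_localOp : D ends = ∑ v, localOp v (localD v) := by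
  ext1 b
  apply LinearMap.ext_ring
  simp only [LinearMap.comp_apply, Finsupp.lsingle_apply, LinearMap.sum_apply, D,
    Finsupp.linearCombination_single, one_smul, Db]
  refine Finset.sum_congr rfl fun v _ ↦ ?_
  rcases hb : b.2 v with h | s
  · simp [localOp_localD_single_inl hb, plug]
  · simp [localOp_localD_single_inr hb]

lemma localOp_localD_mul_self (v : V) :
    (localOp v (localD v) * localOp v (localD v) : Module.End ℤ (SC ends)) = 0 := by
  ext1 b
  apply LinearMap.ext_ring
  simp only [LinearMap.comp_apply, Finsupp.lsingle_apply, Module.End.mul_apply]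
  rcases hb : b.2 v with h | s
  · rw [localOp_localD_single_inl hb, map_zsmul, map_sub,
      localOp_localD_single_inr (s := false) (by simp [plug]),
      localOp_localD_single_inr (s := true) (by simp [plug])]
    simp
  · simp [localOp_localD_single_inr hb]

variable (ends) in
lemma D_mul_self : (D ends * D ends : Module.End ℤ (SC ends)) = 0 := by
  rw [D_eq_sum_localOp]
  exact sum_mul_self_eq_zero_of_anticommute localOp_localD_mul_self fun v w hvw ↦
    localOp_anticomm hvw (localD_isOdd v) (localD_isOdd w)

lemma D_mem_hasDW [DecidableEq E] {i k : ℕ} {c : SC ends} (hc : c ∈ hasDW ends (i + 1) k) :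
    D ends c ∈ hasDW ends i k := by
  rw [D_eq_sum_localOp, LinearMap.sum_apply]
  refine Submodule.sum_mem _ fun v _ ↦ localOp_mem_hasDW (i := i + 1) ?_ ?_ hc
  · intro x y hy
    obtain ⟨h, rfl, rfl | rfl⟩ := exists_inl_inr_of_mem_support_localD hy <;>
      simp [genDeg, add_comm]
  · intro x y hy
    obtain ⟨h, rfl, rfl | rfl⟩ := exists_inl_inr_of_mem_support_localD hy <;> simp [genWt]

lemma D_mem_emptyOn {Z : Set V} {c : SC ends} (hc : c ∈ emptyOn ends Z) :
    D ends c ∈ emptyOn ends Z := by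
  rw [D_eq_sum_localOp, LinearMap.sum_apply]
  exact Submodule.sum_mem _ fun v _ ↦ localOp_mem_emptyOn rfl hc

end Differential

section LeafContraction

variable {V E : Type} {ends : E → V × V}

/-- The local homotopy `v ↦ -h` contracting the generators at a vertex onto `∅` when `h` is the only
half-edge there. -/
noncomputable def localHomotopy {v : V} (h : {h : E × Bool // vtx ends h = v}) : LocalMap ends v :=
  Sum.elim (fun _ ↦ 0) (fun t ↦ cond t (-Finsupp.single (0, Sum.inl h) 1) 0)

lemma eq_of_mem_support_localHomotopy {v : V} {h : {h : E × Bool // vtx ends h = v}}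
    {x : VGen ends v} {y : (E →₀ ℕ) × VGen ends v} (hy : y ∈ (localHomotopy h x).support) :
    x = Sum.inr true ∧ y = (0, Sum.inl h) := by
  classical
  obtain _ | _ | _ := x
  · simp [localHomotopy] at hy
  · simp [localHomotopy] at hy
  · simpa [localHomotopy, Finsupp.single_apply, eq_comm] using hy

lemma localHomotopy_isOdd {v : V} (h : {h : E × Bool // vtx ends h = v}) :
    (localHomotopy h).IsOdd := by
  intro x y hy
  obtain ⟨rfl, rfl⟩ := eq_of_mem_support_localHomotopy hy
  simp

variable [Fintype V] [DecidableEq V]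

lemma localOp_localHomotopy_mem_hasDW [DecidableEq E] {v : V}
    (h : {h : E × Bool // vtx ends h = v}) {i k : ℕ} {c : SC ends} (hc : c ∈ hasDW ends i k) :
    localOp v (localHomotopy h) c ∈ hasDW ends (i + 1) k := by
  refine localOp_mem_hasDW ?_ ?_ hc <;> intro x y hy <;>
    obtain ⟨rfl, rfl⟩ := eq_of_mem_support_localHomotopy hy
  · simp [genDeg, add_comm]
  · simp [genWt]

lemma localOp_localHomotopy_mul_D_add {v : V} (h : {h : E × Bool // vtx ends h = v}) :
    localOp v (localHomotopy h) * D ends + D ends * localOp v (localHomotopy h) =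
      localOp v (localHomotopy h) * localOp v (localD v) +
        localOp v (localD v) * localOp v (localHomotopy h) := by
  rw [D_eq_sum_localOp, Finset.mul_sum, Finset.sum_mul, ← Finset.sum_add_distrib]
  refine Finset.sum_eq_single v (fun w _ hwv ↦ ?_) (by simp)
  rw [localOp_anticomm hwv.symm (localHomotopy_isOdd h) (localD_isOdd w), neg_add_cancel]

lemma localOp_localHomotopy_single_true {v : V} (h : {h : E × Bool // vtx ends h = v})
    {b : Bas ends} (hb : b.2 v = Sum.inr true) :
    localOp v (localHomotopy h) (Finsupp.single b 1) =
      -(sgn ends b.2 v • Finsupp.single (plug ends v b (0, Sum.inl h)) 1) := by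
  rw [localOp_single, hb, localHomotopy, Sum.elim_inr, cond_true, ← Finsupp.single_neg,
    Finsupp.mapDomain_single, Finsupp.single_neg, smul_neg]

lemma localOp_localHomotopy_single_of_ne {v : V} (h : {h : E × Bool // vtx ends h = v})
    {b : Bas ends} (hb : b.2 v ≠ Sum.inr true) :
    localOp v (localHomotopy h) (Finsupp.single b 1) = 0 := by
  rw [localOp_single]
  rcases hb' : b.2 v with g | _ | _
  · simp [localHomotopy]
  · simp [localHomotopy]
  · exact absurd hb' hb

lemma sub_homotopy_mem_emptyOn {v : V} {h : {h : E × Bool // vtx ends h = v}}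
    (huniq : ∀ g, g = h) (c : SC ends) :
    c - (localOp v (localHomotopy h) (D ends c) + D ends (localOp v (localHomotopy h) c)) ∈
      emptyOn ends {v} := by
  have hcomm := LinearMap.congr_fun (localOp_localHomotopy_mul_D_add h) c
  simp only [LinearMap.add_apply, Module.End.mul_apply] at hcomm
  rw [hcomm]
  refine map_mem_of_mem_supported (S := Set.univ) (T := 1 -
    (localOp v (localHomotopy h) * localOp v (localD v) +
      localOp v (localD v) * localOp v (localHomotopy h))) (fun b _ ↦ ?_) (by simp)
  simp only [LinearMap.sub_apply, LinearMap.add_apply, Module.End.mul_apply, Module.End.one_apply]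
  have hempty : ∀ m, Finsupp.single (plug ends v b (m, Sum.inr false)) 1 ∈ emptyOn ends {v} :=
    fun m ↦ Finsupp.single_mem_supported ℤ 1 (by simp [plug])
  have hsgn : ∀ x, sgn ends (plug ends v b x).2 v = sgn ends b.2 v :=
    fun x ↦ sgn_update_self ends b.2 v x.2
  have hplug : plug ends v b (0, b.2 v) = b := by simp [plug]
  rcases hb : b.2 v with g | _ | _
  · obtain rfl := huniq g
    rw [localOp_localD_single_inl hb, localOp_localHomotopy_single_of_ne g (by simp [hb]),
      map_zsmul, map_sub, localOp_localHomotopy_single_of_ne g (by simp [plug]),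
      localOp_localHomotopy_single_true g (by simp [plug]), hsgn, plug_plug_self, add_zero, ← hb,
      hplug, zero_sub, neg_neg, smul_smul, sgn_mul_self]
    simp
  · rw [localOp_localD_single_inr hb, localOp_localHomotopy_single_of_ne h (by simp [hb])]
    simpa [← hb, hplug] using hempty 0
  · rw [localOp_localD_single_inr hb, localOp_localHomotopy_single_true h hb, map_neg, map_zsmul,
      localOp_localD_single_inl (h := h) (by simp [plug]), hsgn, plug_plug_self, plug_plug_self,
      add_zero, zero_add, ← hb, hplug, smul_smul, sgn_mul_self]
    simpa using hempty (Finsupp.single h.1.1 1)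

variable (ends) in
lemma bdry_le_ker [DecidableEq E] (i k : ℕ) : bdry ends i k ≤ LinearMap.ker (D ends) := by
  rintro _ ⟨c, -, rfl⟩
  exact LinearMap.congr_fun (D_mul_self ends) c

lemma exists_mem_emptyOn_sub_mem_bdry [DecidableEq E] {Z : Finset V}
    (hZ : ∀ v ∈ Z, ∃! h, vtx ends h = v) {i k : ℕ} {x : SC ends} (hx : x ∈ hasDW ends i k)
    (hDx : D ends x ∈ emptyOn ends Z) :
    ∃ y ∈ hasDW ends i k, y ∈ emptyOn ends Z ∧ x - y ∈ bdry ends i k := by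
  induction Z using Finset.induction_on with
  | empty => exact ⟨x, hx, by simp [emptyOn], by simp⟩
  | insert v Z _ ih =>
    rw [Finset.coe_insert, emptyOn_insert, Submodule.mem_inf] at hDx
    obtain ⟨y, hy, hyZ, hxy⟩ := ih (fun w hw ↦ hZ w (Finset.mem_insert_of_mem hw)) hDx.2
    obtain ⟨h, hv, huniq⟩ := hZ v (Finset.mem_insert_self v Z)
    have hDy : D ends y = D ends x := by
      rw [← sub_eq_zero, ← neg_sub, ← map_sub, neg_eq_zero]
      exact bdry_le_ker ends i k hxy
    have hsDy : localOp v (localHomotopy ⟨h, hv⟩) (D ends y) = 0 :=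
      localOp_eq_zero_of_mem_emptyOn rfl (hDy ▸ hDx.1)
    have hDsy : D ends (localOp v (localHomotopy ⟨h, hv⟩) y) ∈ bdry ends i k :=
      Submodule.mem_map_of_mem (localOp_localHomotopy_mem_hasDW _ hy)
    refine ⟨y - D ends (localOp v (localHomotopy ⟨h, hv⟩) y), ?_, ?_, ?_⟩
    · exact sub_mem hy (D_mem_hasDW (localOp_localHomotopy_mem_hasDW _ hy))
    · rw [Finset.coe_insert, emptyOn_insert]
      refine ⟨?_, sub_mem hyZ (D_mem_emptyOn (localOp_mem_emptyOn rfl hyZ))⟩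
      have hmem := sub_homotopy_mem_emptyOn (h := ⟨h, hv⟩)
        (fun g ↦ Subtype.ext (huniq g.1 g.2)) y
      rwa [hsDy, zero_add] at hmem
    · rw [← sub_add]
      exact add_mem hxy hDsy

end LeafContraction

section PolynomialChains

open MvPolynomial

variable {V E : Type} {ends : E → V × V}

/-- The chain `p · f` of the free `ℤ[E]`-module on the states. -/
noncomputable def polyChain (f : States ends) : MvPolynomial E ℤ →ₗ[ℤ] SC ends :=
  (basisMonomials E ℤ).constr ℤ fun m ↦ Finsupp.single (m, f) 1

lemma polyChain_monomial (f : States ends) (m : E →₀ ℕ) :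
    polyChain f (monomial m 1) = Finsupp.single (m, f) 1 := by
  simpa [polyChain] using (basisMonomials E ℤ).constr_basis ℤ (fun m ↦ Finsupp.single (m, f) 1) m

lemma stab_polyChain (e : E) (f : States ends) (p : MvPolynomial E ℤ) :
    stab ends e (polyChain f p) = polyChain f (X e * p) := by
  suffices stab ends e ∘ₗ polyChain f = polyChain f ∘ₗ LinearMap.mulLeft ℤ (X e) from
    LinearMap.congr_fun this p
  refine (basisMonomials E ℤ).ext fun m ↦ ?_
  simp [polyChain_monomial, stab, Finsupp.mapDomain_single, X, monomial_mul, add_comm]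

lemma polyChain_apply_self (f : States ends) (p : MvPolynomial E ℤ) (m : E →₀ ℕ) :
    polyChain f p (m, f) = coeff m p := by
  classical
  suffices Finsupp.lapply (m, f) ∘ₗ polyChain f = lcoeff ℤ m from LinearMap.congr_fun this p
  refine (basisMonomials E ℤ).ext fun n ↦ ?_
  simp [polyChain_monomial, Finsupp.single_apply, coeff_monomial]

lemma polyChain_apply_of_ne {f g : States ends} (h : g ≠ f) (p : MvPolynomial E ℤ) (m : E →₀ ℕ) :
    polyChain f p (m, g) = 0 := by
  classical
  suffices Finsupp.lapply (m, g) ∘ₗ polyChain f = 0 from LinearMap.congr_fun this p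
  refine (basisMonomials E ℤ).ext fun n ↦ ?_
  simp [polyChain_monomial, h.symm]

lemma polyChain_mem_supported (f : States ends) (p : MvPolynomial E ℤ) :
    polyChain f p ∈ Finsupp.supported ℤ ℤ {b | b.2 = f ∧ b.1 ∈ p.support} := by
  rw [Finsupp.mem_supported']
  rintro ⟨m, g⟩ hb
  obtain rfl | hg := eq_or_ne g f
  · rw [polyChain_apply_self]
    simpa using hb
  · exact polyChain_apply_of_ne hg p m

end PolynomialChains

end Swiatkowski

namespace Star4

open Swiatkowski MvPolynomial

section Chains

/-- The leaves of the star. -/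
def leaves : Finset (Option (Fin 4)) := Finset.univ.erase none

lemma existsUnique_vtx_eq_of_mem_leaves {v : Option (Fin 4)} (hv : v ∈ leaves) :
    ∃! h, vtx ends h = v := by
  obtain _ | i := v
  · simp [leaves] at hv
  · refine ⟨(i, true), rfl, ?_⟩
    rintro ⟨e, _ | _⟩ h
    · simp [vtx, ends] at h
    · simpa [vtx, ends] using h

/-- The state that is the degree-zero generator `s` at the centre and `∅` at the leaves. -/
def stateCentre (s : Bool) : States ends := Function.update (fun _ ↦ Sum.inr false) none (Sum.inr s)

/-- The chain `∑ⱼ pⱼ hⱼ`, with `∅` at the leaves. -/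
noncomputable def starChain : (Fin 4 → MvPolynomial (Fin 4) ℤ) →ₗ[ℤ] SC ends :=
  ∑ j, polyChain (stateH j) ∘ₗ LinearMap.proj j

lemma stateH_injective : Function.Injective stateH := fun i j h ↦ by
  simpa using congrArg (fun h ↦ h.1.1) (Sum.inl_injective (congrFun h none))

lemma starChain_apply (p : Fin 4 → MvPolynomial (Fin 4) ℤ) :
    starChain p = ∑ j, polyChain (stateH j) (p j) := by
  simp [starChain]

lemma starChain_single (j : Fin 4) (p : MvPolynomial (Fin 4) ℤ) :
    starChain (Pi.single j p) = polyChain (stateH j) p := by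
  rw [starChain_apply, Finset.sum_eq_single j (fun i _ hij ↦ by simp [hij]) (by simp),
    Pi.single_eq_same]

lemma starChain_injective : Function.Injective starChain := by
  refine (injective_iff_map_eq_zero _).mpr fun p hp ↦ ?_
  ext j m
  have h := DFunLike.congr_fun hp (m, stateH j)
  rw [starChain_apply, Finsupp.finsetSum_apply, Finset.sum_eq_single j
    (fun i _ hij ↦ polyChain_apply_of_ne (stateH_injective.ne hij.symm) _ _) (by simp),
    polyChain_apply_self] at h
  simpa using h

lemma stab_starChain (e : Fin 4) (p : Fin 4 → MvPolynomial (Fin 4) ℤ) :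
    stab ends e (starChain p) = starChain ((X e : MvPolynomial (Fin 4) ℤ) • p) := by
  simp [starChain_apply, stab_polyChain]

lemma sgn_stateH_none (j : Fin 4) : sgn ends (stateH j) none = 1 := by
  rw [sgn, Finset.filter_false_of_mem, Finset.card_empty, pow_zero]
  rintro (_ | i) - <;> simp [stateH]

lemma D_polyChain_stateH (j : Fin 4) (p : MvPolynomial (Fin 4) ℤ) :
    D ends (polyChain (stateH j) p) =
      polyChain (stateCentre false) (X j * p) - polyChain (stateCentre true) p := by
  have hupdate : ∀ s, Function.update (stateH j) none (Sum.inr s) = stateCentre s := fun s ↦ by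
    funext v
    obtain _ | i := v <;> simp [stateCentre, stateH]
  suffices D ends ∘ₗ polyChain (stateH j) = polyChain (stateCentre false) ∘ₗ
      LinearMap.mulLeft ℤ (X j) - polyChain (stateCentre true) from LinearMap.congr_fun this p
  refine (basisMonomials (Fin 4) ℤ).ext fun m ↦ ?_
  have hD : D ends (Finsupp.single (m, stateH j) 1) =
      Finsupp.single (m + Finsupp.single j 1, stateCentre false) 1 -
        Finsupp.single (m, stateCentre true) 1 := by
    rw [D_eq_sum_localOp, LinearMap.sum_apply, Fintype.sum_option,
      localOp_localD_single_inl (v := none) (b := (m, stateH j)) (h := ⟨(j, false), rfl⟩) rfl,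
      Finset.sum_eq_zero fun i _ ↦ localOp_localD_single_inr rfl]
    simp only [plug, hupdate, sgn_stateH_none, one_smul, add_zero]
  simp [polyChain_monomial, hD, X, monomial_mul, add_comm]

lemma D_starChain (p : Fin 4 → MvPolynomial (Fin 4) ℤ) :
    D ends (starChain p) =
      polyChain (stateCentre false) (∑ j, X j * p j) - polyChain (stateCentre true) (∑ j, p j) := by
  simp only [starChain_apply, map_sum, D_polyChain_stateH, Finset.sum_sub_distrib]

lemma D_starChain_eq_zero_iff (p : Fin 4 → MvPolynomial (Fin 4) ℤ) :
    D ends (starChain p) = 0 ↔ ∑ j, X j * p j = 0 ∧ ∑ j, p j = 0 := by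
  refine ⟨fun h ↦ ?_, fun ⟨h₁, h₂⟩ ↦ by rw [D_starChain, h₁, h₂, map_zero, map_zero, sub_zero]⟩
  have hne : stateCentre false ≠ stateCentre true := fun h ↦ by
    simpa [stateCentre] using congrFun h none
  rw [D_starChain] at h
  constructor <;> ext m
  · simpa only [Finsupp.sub_apply, polyChain_apply_self, polyChain_apply_of_ne hne,
      sub_zero, Finsupp.coe_zero, Pi.zero_apply, coeff_zero] using
      DFunLike.congr_fun h (m, stateCentre false)
  · simpa only [Finsupp.sub_apply, polyChain_apply_self, polyChain_apply_of_ne hne.symm,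
      zero_sub, neg_eq_zero, Finsupp.coe_zero, Pi.zero_apply, coeff_zero] using
      DFunLike.congr_fun h (m, stateCentre true)

lemma starChain_mem_emptyOn_leaves (p : Fin 4 → MvPolynomial (Fin 4) ℤ) :
    starChain p ∈ emptyOn ends leaves := by
  rw [starChain_apply]
  refine Submodule.sum_mem _ fun j _ ↦
    Finsupp.supported_mono (fun b hb v hv ↦ ?_) (polyChain_mem_supported (stateH j) (p j))
  obtain _ | i := v
  · simp [leaves] at hv
  · rw [hb.1]
    rfl

lemma degB_eq_genDeg_none {b : Bas ends} (hb : ∀ v ∈ leaves, b.2 v = Sum.inr false) :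
    degB ends b = genDeg (b.2 none) := by
  have hleaf : ∀ i, genDeg (b.2 (some i)) = 0 := fun i ↦ by
    rw [hb (some i) (by simp [leaves])]
    rfl
  simp only [degB_eq_sum, Fintype.sum_option, hleaf, Finset.sum_const_zero, add_zero]

lemma wtB_eq_genWt_none {b : Bas ends} (hb : ∀ v ∈ leaves, b.2 v = Sum.inr false) :
    wtB ends b = b.1.degree + genWt (b.2 none) := by
  simp [wtB_eq_sum, Fintype.sum_option, genWt, hb (some _) (by simp [leaves])]

lemma stateH_eq_empty_of_mem_leaves (j : Fin 4) {v : Option (Fin 4)} (hv : v ∈ leaves) :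
    stateH j v = Sum.inr false := by
  obtain _ | i := v
  · simp [leaves] at hv
  · rfl

lemma starChain_mem_hasDW {n : ℕ} {p : Fin 4 → MvPolynomial (Fin 4) ℤ}
    (hp : ∀ j, (p j).IsHomogeneous n) : starChain p ∈ hasDW ends 1 (n + 1) := by
  rw [starChain_apply]
  refine Submodule.sum_mem _ fun j _ ↦
    Finsupp.supported_mono (fun b hb ↦ ?_) (polyChain_mem_supported (stateH j) (p j))
  obtain ⟨m, f⟩ := b
  obtain ⟨rfl, hm⟩ : f = stateH j ∧ m ∈ (p j).support := hb
  have hempty : ∀ v ∈ leaves, ((m, stateH j) : Bas ends).2 v = Sum.inr false :=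
    fun v ↦ stateH_eq_empty_of_mem_leaves j
  have hdeg : m.degree = n := by
    rw [Finsupp.degree_eq_weight_one]
    exact hp j (mem_support_iff.mp hm)
  exact ⟨by simp [degB_eq_genDeg_none hempty, genDeg, stateH],
    by simp [wtB_eq_genWt_none hempty, genWt, stateH, hdeg]⟩

lemma exists_starChain_eq {n : ℕ} {x : SC ends} (hx : x ∈ hasDW ends 1 (n + 1))
    (hempty : x ∈ emptyOn ends leaves) :
    ∃ p : Fin 4 → MvPolynomial (Fin 4) ℤ, (∀ j, (p j).IsHomogeneous n) ∧ starChain p = x := by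
  have hx' : x ∈ Finsupp.supported ℤ ℤ ({b | degB ends b = 1 ∧ wtB ends b = n + 1} ∩
      {b | ∀ v ∈ leaves, b.2 v = Sum.inr false}) := by
    rw [Finsupp.supported_inter]
    exact ⟨hx, hempty⟩
  have hmem := map_mem_of_mem_supported (T := LinearMap.id)
    (N := (Submodule.pi Set.univ fun _ ↦ homogeneousSubmodule (Fin 4) ℤ n).map starChain)
    (fun b hb ↦ ?_) hx'
  · obtain ⟨p, hp, hpx⟩ := hmem
    exact ⟨p, fun j ↦ hp j trivial, hpx⟩
  obtain ⟨m, f⟩ := b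
  obtain ⟨⟨hdeg, hwt⟩, hf : ∀ v ∈ leaves, f v = Sum.inr false⟩ := hb
  rw [degB_eq_genDeg_none hf] at hdeg
  rw [wtB_eq_genWt_none hf] at hwt
  rcases hc : f none with ⟨⟨j, _ | _⟩, hj⟩ | s
  · have hfj : f = stateH j := by
      funext v
      obtain _ | i := v
      · exact hc
      · exact hf (some i) (by simp [leaves])
    subst hfj
    refine ⟨Pi.single j (monomial m 1), fun i _ ↦ ?_, ?_⟩
    · obtain rfl | hij := eq_or_ne i j
      · simpa using isHomogeneous_monomial 1 (by simpa [genWt, stateH] using hwt)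
      · simp [hij]
    · rw [starChain_single, polyChain_monomial, LinearMap.id_apply]
  · simp [vtx, ends] at hj
  · simp [genDeg, hc] at hdeg

lemma eq_zero_of_mem_hasDW_two {k : ℕ} {x : SC ends} (hx : x ∈ hasDW ends 2 k)
    (hempty : x ∈ emptyOn ends leaves) : x = 0 := by
  ext b
  by_contra hb
  have hb' : b ∈ x.support := by simpa using hb
  have hdeg := (hx b hb').1
  rw [degB_eq_genDeg_none (hempty hb'), genDeg] at hdeg
  split_ifs at hdeg; lia

end Chains

section Homology

lemma eq_zero_of_starChain_mem_bdry {k : ℕ} {p : Fin 4 → MvPolynomial (Fin 4) ℤ}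
    (hp : starChain p ∈ bdry ends 1 k) : p = 0 := by
  obtain ⟨y, hy, hDy⟩ := hp
  obtain ⟨z, hz, hz_empty, hyz⟩ := exists_mem_emptyOn_sub_mem_bdry
    (fun v ↦ existsUnique_vtx_eq_of_mem_leaves) hy (hDy ▸ starChain_mem_emptyOn_leaves p)
  rw [eq_zero_of_mem_hasDW_two hz hz_empty, sub_zero] at hyz
  apply starChain_injective
  rw [← hDy, map_zero]
  exact bdry_le_ker ends 2 k hyz

lemma exists_sub_starChain_mem_bdry {n : ℕ} {x : SC ends} (hx : x ∈ cyc ends 1 (n + 1)) :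
    ∃ p : Fin 4 → MvPolynomial (Fin 4) ℤ, (∀ j, (p j).IsHomogeneous n) ∧
      ∑ j, X j * p j = 0 ∧ ∑ j, p j = 0 ∧ x - starChain p ∈ bdry ends 1 (n + 1) := by
  obtain ⟨hDx, hx⟩ : D ends x = 0 ∧ x ∈ hasDW ends 1 (n + 1) := hx
  obtain ⟨y, hy, hy_empty, hxy⟩ := exists_mem_emptyOn_sub_mem_bdry
    (fun v ↦ existsUnique_vtx_eq_of_mem_leaves) hx (hDx ▸ zero_mem (emptyOn ends leaves))
  obtain ⟨p, hp, rfl⟩ := exists_starChain_eq hy hy_empty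
  have hDp : D ends (starChain p) = 0 := by
    simpa [hDx] using bdry_le_ker ends 1 (n + 1) hxy
  obtain ⟨h₁, h₂⟩ := (D_starChain_eq_zero_iff p).mp hDp
  exact ⟨p, hp, h₁, h₂, hxy⟩

/-- The vector of coefficients `pᵢ` in `α = ∑ᵢ pᵢ hᵢ` for the star class `α` of the edges
`0, j, k`. -/
noncomputable def starPoly (j k : Fin 4) : Fin 4 → MvPolynomial (Fin 4) ℤ :=
  (X k : MvPolynomial (Fin 4) ℤ) • (Pi.single 0 1 - Pi.single j 1) +
    (X j : MvPolynomial (Fin 4) ℤ) • (Pi.single k 1 - Pi.single 0 1) +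
    (X 0 : MvPolynomial (Fin 4) ℤ) • (Pi.single j 1 - Pi.single k 1)

lemma sH_eq_starChain (j : Fin 4) : sH j = starChain (Pi.single j 1) := by
  rw [starChain_single, ← C_1, ← monomial_zero', polyChain_monomial, sH]

lemma starCyc_eq_starChain (j k : Fin 4) : starCyc j k = starChain (starPoly j k) := by
  simp only [starCyc, sH_eq_starChain, ← map_sub, stab_starChain, ← map_add, starPoly]

lemma starPoly_apply (j k i : Fin 4) :
    starPoly j k i = X k * ((if i = 0 then 1 else 0) - if i = j then 1 else 0) +
      X j * ((if i = k then 1 else 0) - if i = 0 then 1 else 0) +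
      X 0 * ((if i = j then 1 else 0) - if i = k then 1 else 0) := by
  simp only [starPoly, Pi.add_apply, Pi.smul_apply, Pi.sub_apply, smul_eq_mul, Pi.single_apply]

lemma sum_starPoly (j k : Fin 4) : ∑ i, starPoly j k i = 0 := by
  simp [starPoly, Finset.sum_add_distrib, ← Finset.mul_sum]

lemma sum_X_mul_starPoly (j k : Fin 4) : ∑ i, X i * starPoly j k i = 0 := by
  simp only [starPoly_apply, mul_add, mul_sub, Finset.sum_add_distrib, Finset.sum_sub_distrib,
    mul_ite, mul_one, mul_zero, Finset.sum_ite_eq', Finset.mem_univ, if_true]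
  ring

lemma isHomogeneous_starPoly (j k i : Fin 4) : (starPoly j k i).IsHomogeneous 1 := by
  have hsingle : ∀ l, (Pi.single l 1 : Fin 4 → MvPolynomial (Fin 4) ℤ) i |>.IsHomogeneous 0 :=
    fun l ↦ by
      obtain rfl | hl := eq_or_ne i l
      · simpa using isHomogeneous_one (Fin 4) ℤ
      · simpa [hl] using isHomogeneous_zero (Fin 4) ℤ 0
  exact ((((isHomogeneous_X ℤ k).mul ((hsingle 0).sub (hsingle j))).add
    ((isHomogeneous_X ℤ j).mul ((hsingle k).sub (hsingle 0)))).add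
    ((isHomogeneous_X ℤ 0).mul ((hsingle j).sub (hsingle k))))

/-- The combination of the star classes `α₁₂₃, α₁₂₄, α₁₃₄` with polynomial coefficients `L`. -/
noncomputable def starComb : (Fin 3 → MvPolynomial (Fin 4) ℤ) →ₗ[MvPolynomial (Fin 4) ℤ]
    Fin 4 → MvPolynomial (Fin 4) ℤ :=
  Fintype.linearCombination _ fun a ↦ starPoly (pairs a).1 (pairs a).2

lemma starComb_apply (L : Fin 3 → MvPolynomial (Fin 4) ℤ) (i : Fin 4) :
    starComb L i = L 0 * starPoly 1 2 i + L 1 * starPoly 1 3 i + L 2 * starPoly 2 3 i := by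
  simp [starComb, Fintype.linearCombination_apply, Fin.sum_univ_three, pairs]

lemma starComb_apply_one (L : Fin 3 → MvPolynomial (Fin 4) ℤ) :
    starComb L 1 = -((X 3 - X 0) * L 1) - (X 2 - X 0) * L 0 := by
  simp only [starComb_apply, starPoly_apply, Fin.reduceEq, if_true, if_false]
  ring

lemma starComb_apply_two (L : Fin 3 → MvPolynomial (Fin 4) ℤ) :
    starComb L 2 = (X 1 - X 0) * L 0 - (X 3 - X 0) * L 2 := by
  simp only [starComb_apply, starPoly_apply, Fin.reduceEq, if_true, if_false]
  ring

lemma starComb_apply_three (L : Fin 3 → MvPolynomial (Fin 4) ℤ) :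
    starComb L 3 = (X 1 - X 0) * L 1 + (X 2 - X 0) * L 2 := by
  simp only [starComb_apply, starPoly_apply, Fin.reduceEq, if_true, if_false]
  ring

lemma sum_starComb (L : Fin 3 → MvPolynomial (Fin 4) ℤ) : ∑ i, starComb L i = 0 := by
  simp only [starComb, Fintype.linearCombination_apply, Finset.sum_apply, Pi.smul_apply]
  rw [Finset.sum_comm]
  exact Finset.sum_eq_zero fun a _ ↦ by rw [← Finset.smul_sum, sum_starPoly, smul_zero]

lemma eq_of_sum_eq_zero {p q : Fin 4 → MvPolynomial (Fin 4) ℤ} (hp : ∑ j, p j = 0)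
    (hq : ∑ j, q j = 0) (h₁ : p 1 = q 1) (h₂ : p 2 = q 2) (h₃ : p 3 = q 3) : p = q := by
  have h₀ : p 0 = q 0 := by
    rw [Fin.sum_univ_four] at hp hq
    linear_combination hp - hq - h₁ - h₂ - h₃
  funext i
  fin_cases i
  exacts [h₀, h₁, h₂, h₃]

lemma exists_eq_starComb {n : ℕ} {p : Fin 4 → MvPolynomial (Fin 4) ℤ}
    (hp : ∀ j, (p j).IsHomogeneous (1 + n)) (hX : ∑ j, X j * p j = 0) (hsum : ∑ j, p j = 0) :
    ∃ L : Fin 3 → MvPolynomial (Fin 4) ℤ, (∀ a, (L a).IsHomogeneous n) ∧ p = starComb L := by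
  have hsyz : (X 1 - X 0) * p 1 + (X 2 - X 0) * p 2 + (X 3 - X 0) * p 3 = 0 := by
    rw [Fin.sum_univ_four] at hX hsum
    linear_combination hX - X 0 * hsum
  obtain ⟨u, v, w, hu, hv, hw, h₁, h₂, h₃⟩ := exists_isHomogeneous_koszul_of_add_eq_zero
    (isHomogeneous_X_sub_X 1 0) (isHomogeneous_X_sub_X 2 0) (isHomogeneous_X_sub_X 3 0)
    (isWeaklyRegular_X_sub_X (js := [1, 2, 3]) (by decide)) (hp 1) (hp 2) (hp 3) hsyz
  refine ⟨![w, u, v], fun a ↦ ?_, eq_of_sum_eq_zero hsum (sum_starComb _) ?_ ?_ ?_⟩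
  · fin_cases a
    exacts [hw, hu, hv]
  · simpa [starComb_apply_one] using h₁
  · simpa [starComb_apply_two] using h₂
  · simpa [starComb_apply_three] using h₃

/-- The coefficients `(e₄ - e₁, e₁ - e₃, e₂ - e₁)` of the relation between the star classes. -/
noncomputable def relPoly : Fin 3 → MvPolynomial (Fin 4) ℤ := ![X 3 - X 0, X 0 - X 2, X 1 - X 0]

lemma starComb_relPoly : starComb relPoly = 0 := by
  refine eq_of_sum_eq_zero (sum_starComb _) (by simp) ?_ ?_ ?_
  · simp only [starComb_apply_one, relPoly, Matrix.cons_val, Pi.zero_apply]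
    ring
  · simp only [starComb_apply_two, relPoly, Matrix.cons_val, Pi.zero_apply]
    ring
  · simp only [starComb_apply_three, relPoly, Matrix.cons_val, Pi.zero_apply]
    ring

lemma exists_eq_smul_relPoly {n : ℕ} {L : Fin 3 → MvPolynomial (Fin 4) ℤ}
    (hL : ∀ a, (L a).IsHomogeneous (1 + n)) (h : starComb L = 0) :
    ∃ s : MvPolynomial (Fin 4) ℤ, s.IsHomogeneous n ∧ L = s • relPoly := by
  have h_two : (X 1 - X 0) * L 0 = (X 3 - X 0) * L 2 :=
    sub_eq_zero.mp (starComb_apply_two L ▸ congrFun h 2)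
  have h_three : (X 1 - X 0) * L 1 = -((X 2 - X 0) * L 2) :=
    eq_neg_of_add_eq_zero_left (starComb_apply_three L ▸ congrFun h 3)
  obtain ⟨s, hs, hu, hv, hw⟩ := exists_isHomogeneous_koszul_of_mul_eq_mul
    (isHomogeneous_X_sub_X 1 0) (isHomogeneous_X_sub_X 2 0) (isHomogeneous_X_sub_X 3 0)
    (isWeaklyRegular_X_sub_X (js := [1, 2]) (by decide)) (hL 1) (hL 2) (hL 0) h_two h_three
  have h₀ : L 0 = -s * (X 3 - X 0) := by rw [hw]; ring
  have h₁ : L 1 = -s * (X 0 - X 2) := by rw [hu]; ring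
  have h₂ : L 2 = -s * (X 1 - X 0) := by rw [hv]; ring
  refine ⟨-s, hs.neg, funext fun a ↦ ?_⟩
  fin_cases a
  exacts [h₀, h₁, h₂]

end Homology

section Presentation

/-- The coefficients of `α₁₂₃, α₁₂₄, α₁₃₄` in the combination `∑ c q • gen q`. -/
noncomputable def linPoly : (Fin 3 × Fin 4 → ℤ) →ₗ[ℤ] Fin 3 → MvPolynomial (Fin 4) ℤ :=
  LinearMap.pi fun a ↦ Fintype.linearCombination ℤ (shiftedX ℤ 0) ∘ₗ
    LinearMap.funLeft ℤ ℤ (Prod.mk a)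

lemma linPoly_apply (c : Fin 3 × Fin 4 → ℤ) (a : Fin 3) :
    linPoly c a = ∑ i, c (a, i) • shiftedX ℤ 0 i := rfl

lemma linPoly_injective : Function.Injective linPoly := by
  refine (injective_iff_map_eq_zero _).mpr fun c hc ↦ ?_
  ext ⟨a, i⟩
  exact Fintype.linearIndependent_iff.mp (linearIndependent_shiftedX 0) (fun i ↦ c (a, i))
    (congrFun hc a) i

lemma isHomogeneous_linPoly (c : Fin 3 × Fin 4 → ℤ) (a : Fin 3) :
    (linPoly c a).IsHomogeneous 1 :=
  Submodule.sum_smul_mem (homogeneousSubmodule (Fin 4) ℤ 1) (fun i ↦ c (a, i))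
    fun i _ ↦ isHomogeneous_shiftedX 0 i

lemma exists_linPoly_eq {L : Fin 3 → MvPolynomial (Fin 4) ℤ} (hL : ∀ a, (L a).IsHomogeneous 1) :
    ∃ c, linPoly c = L := by
  choose c hc using fun a ↦ exists_eq_sum_smul_shiftedX 0 (hL a)
  exact ⟨fun q ↦ c q.1 q.2, funext fun a ↦ (hc a).symm⟩

lemma linPoly_rel : linPoly rel = relPoly := by
  funext a
  rw [linPoly_apply, Fin.sum_univ_four]
  fin_cases a <;> simp [rel, relPoly, shiftedX]

lemma gen_eq_starChain (q : Fin 3 × Fin 4) :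
    gen q = starChain (shiftedX ℤ 0 q.2 • starPoly (pairs q.1).1 (pairs q.1).2) := by
  rw [gen, shiftedX, starCyc_eq_starChain]
  split_ifs
  · exact stab_starChain 0 _
  · rw [LinearMap.sub_apply, stab_starChain, stab_starChain, ← map_sub, ← sub_smul]

lemma sum_smul_gen (c : Fin 3 × Fin 4 → ℤ) :
    ∑ q, c q • gen q = starChain (starComb (linPoly c)) := by
  simp only [gen_eq_starChain, ← map_zsmul, ← map_sum, starComb, Fintype.linearCombination_apply,
    linPoly_apply, Finset.sum_smul, Fintype.sum_prod_type, smul_assoc]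

lemma gen_mem_cyc (q : Fin 3 × Fin 4) : gen q ∈ cyc ends 1 3 := by
  rw [gen_eq_starChain]
  refine ⟨(D_starChain_eq_zero_iff _).mpr ⟨?_, ?_⟩, starChain_mem_hasDW (n := 2) fun j ↦
    (isHomogeneous_shiftedX 0 q.2).mul (isHomogeneous_starPoly _ _ j)⟩
  · simp only [Pi.smul_apply, mul_smul_comm, ← Finset.smul_sum, sum_X_mul_starPoly, smul_zero]
  · simp only [Pi.smul_apply, ← Finset.smul_sum, sum_starPoly, smul_zero]

lemma sum_rel_smul_gen : ∑ q, rel q • gen q = 0 := by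
  rw [sum_smul_gen, linPoly_rel, starComb_relPoly, map_zero]

lemma exists_sub_sum_smul_gen_mem_bdry {x : SC ends} (hx : x ∈ cyc ends 1 3) :
    ∃ c : Fin 3 × Fin 4 → ℤ, x - ∑ q, c q • gen q ∈ bdry ends 1 3 := by
  obtain ⟨p, hp, hX, hsum, hxp⟩ := exists_sub_starChain_mem_bdry hx
  obtain ⟨L, hL, rfl⟩ := exists_eq_starComb (n := 1) hp hX hsum
  obtain ⟨c, rfl⟩ := exists_linPoly_eq hL
  exact ⟨c, by rwa [sum_smul_gen]⟩

lemma exists_eq_smul_rel_of_mem_bdry {c : Fin 3 × Fin 4 → ℤ}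
    (hc : ∑ q, c q • gen q ∈ bdry ends 1 3) : ∃ n : ℤ, c = n • rel := by
  rw [sum_smul_gen] at hc
  obtain ⟨s, hs, hcs⟩ := exists_eq_smul_relPoly (n := 0) (isHomogeneous_linPoly c)
    (eq_zero_of_starChain_mem_bdry hc)
  obtain ⟨n, rfl⟩ : ∃ n, s = C n := ⟨_, totalDegree_eq_zero_iff_eq_C.mp
    ((totalDegree_zero_iff_isHomogeneous (Fin 4)).mpr hs)⟩
  refine ⟨n, linPoly_injective ?_⟩
  rw [hcs, map_zsmul, linPoly_rel]
  funext a
  simp only [Pi.smul_apply, smul_eq_mul, smul_eq_C_mul]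

/-- The homology class of `∑ c q • gen q`. -/
noncomputable def genClass : (Fin 3 × Fin 4 → ℤ) →ₗ[ℤ]
    cyc ends 1 3 ⧸ (bdry ends 1 3).comap (cyc ends 1 3).subtype :=
  Submodule.mkQ _ ∘ₗ Fintype.linearCombination ℤ fun q ↦ ⟨gen q, gen_mem_cyc q⟩

lemma genClass_surjective : Function.Surjective genClass := by
  intro y
  obtain ⟨x, rfl⟩ := Submodule.mkQ_surjective _ y
  obtain ⟨c, hc⟩ := exists_sub_sum_smul_gen_mem_bdry x.2
  refine ⟨c, ((Submodule.Quotient.eq _).mpr ?_).symm⟩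
  simpa [Fintype.linearCombination_apply] using hc

lemma ker_genClass : LinearMap.ker genClass = Submodule.span ℤ {rel} := by
  have hmem : ∀ c, c ∈ LinearMap.ker genClass ↔ ∑ q, c q • gen q ∈ bdry ends 1 3 := fun c ↦ by
    rw [LinearMap.mem_ker, genClass, LinearMap.comp_apply, Submodule.mkQ_apply,
      Submodule.Quotient.mk_eq_zero, Submodule.mem_comap, Fintype.linearCombination_apply]
    simp only [Submodule.subtype_apply, AddSubmonoidClass.coe_finsetSum, Submodule.coe_smul]
  ext c
  rw [hmem, Submodule.mem_span_singleton]
  constructor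
  · exact fun hc ↦ (exists_eq_smul_rel_of_mem_bdry hc).imp fun _ ↦ Eq.symm
  · rintro ⟨n, rfl⟩
    simp only [Pi.smul_apply, smul_assoc, ← Finset.smul_sum, sum_rel_smul_gen, smul_zero,
      zero_mem]

lemma nonempty_Hgr_addEquiv : Nonempty (Hgr ends 1 3 ≃+ (Fin 11 → ℤ)) := by
  obtain ⟨e⟩ := nonempty_linearEquiv_of_ker_eq_span_singleton genClass_surjective ker_genClass
    (i₀ := (0, 3)) rfl
  have hcard : Fintype.card {q : Fin 3 × Fin 4 // q ≠ (0, 3)} = 11 := by decide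
  exact ⟨(e.trans (LinearEquiv.funCongrLeft ℤ ℤ (Fintype.equivFinOfCardEq hcard).symm)).toAddEquiv⟩

end Presentation

/-- In `H₁(B₃(S₄))` — the homology of the Świątkowski
complex of the star graph with four edges in degree 1 and weight 3 — the
stabilized star classes satisfy the relation
`(e₄ − e₁)·α₁₂₃ − (e₃ − e₁)·α₁₂₄ + (e₂ − e₁)·α₁₃₄ = 0`, and `H₁(B₃(S₄))` is
free abelian of rank 11, generated by the classes `(e_i − e₁)·α_{1jk}` and
`e₁·α_{1jk}`, subject only to that relation: the generators are cycles,
the relation is a boundary, every degree-1 weight-3 cycle is a combination of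
the generators modulo boundaries, the only combinations of the generators that
are boundaries are the multiples of the relation, and the homology is
isomorphic to `ℤ¹¹`. -/
theorem H1_B3_star4_presentation :
    (∀ q : Fin 3 × Fin 4, gen q ∈ cyc ends 1 3) ∧
    (∑ q : Fin 3 × Fin 4, rel q • gen q) ∈ bdry ends 1 3 ∧
    (∀ x ∈ cyc ends 1 3, ∃ c : Fin 3 × Fin 4 → ℤ,
      x - ∑ q : Fin 3 × Fin 4, c q • gen q ∈ bdry ends 1 3) ∧
    (∀ c : Fin 3 × Fin 4 → ℤ,
      (∑ q : Fin 3 × Fin 4, c q • gen q) ∈ bdry ends 1 3 → ∃ n : ℤ, c = n • rel) ∧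
    Nonempty (Hgr ends 1 3 ≃+ (Fin 11 → ℤ)) := by
  exact ⟨gen_mem_cyc, sum_rel_smul_gen ▸ zero_mem (bdry ends 1 3),
    fun _ ↦ exists_sub_sum_smul_gen_mem_bdry, fun _ ↦ exists_eq_smul_rel_of_mem_bdry,
    nonempty_Hgr_addEquiv⟩

end Star4
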